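/- arXiv:2205.14027 — 2 statements merged into one kernel-verified Lean document; each statement's English description precedes it below -/
import Mathlib

section
/- Let p be a Markov transition kernel on (X, Σ) with invariant probability measure π, A_π the associated Koopman operator on L²(X, π), and ρ(dx,dy) = π(dx) p(x,dy). Let H be a separable Hilbert space, S : H → L²(X, π) a Hilbert–Schmidt operator, and G : H → H a Hilbert–Schmidt operator. Then for every Hilbert (orthonormal) basis (h_i)_{i∈ℕ} of H, Σ_{i∈ℕ} ∫_{X×X} ((S h_i)(y) − (S G h_i)(x))² ρ(dx,dy) = ‖S‖²_HS − ‖A_π ∘ S‖²_HS + ‖A_π ∘ S − S ∘ G‖²_HS (where the evaluations use any measurable representatives of the L² classes; both marginals of ρ equal π, so the integrals are well defined). -/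
open MeasureTheory ProbabilityTheory
open scoped ProbabilityTheory

/- Conditionally on `x`, the mean-square error of predicting `f y` by the constant `g x` splits into
the variance of `f` under `p x` and the squared bias `‖A f x - g x‖²`. Integrating over `x` gives
`‖f‖² - ‖A f‖² + ‖A f - g‖²`, and the theorem is the sum of these identities over
`f = S hᵢ`, `g = S G hᵢ`. The three series converge separately because `A` is a contraction and
because Hilbert–Schmidt operators form an ideal, so that `S ∘ G` is Hilbert–Schmidt for every
bounded `G`. -/

open scoped ENNReal InnerProductSpace

section HilbertSchmidt

variable {𝕜 ι κ H K L : Type*} [RCLike 𝕜]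
  [NormedAddCommGroup H] [InnerProductSpace 𝕜 H]
  [NormedAddCommGroup K] [InnerProductSpace 𝕜 K]
  [NormedAddCommGroup L] [InnerProductSpace 𝕜 L]

theorem summable_norm_sq_iff_tsum_enorm_sq_ne_top {F : Type*} [NormedAddCommGroup F] {v : ι → F} :
    (Summable fun i => ‖v i‖ ^ 2) ↔ ∑' i, ‖v i‖ₑ ^ 2 ≠ ∞ := by
  simp only [enorm_eq_nnnorm, ← ENNReal.coe_pow, ENNReal.tsum_coe_ne_top_iff_summable_coe,
    NNReal.coe_pow, coe_nnnorm]

theorem summable_norm_sub_sq {F : Type*} [NormedAddCommGroup F] {v w : ι → F}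
    (hv : Summable fun i => ‖v i‖ ^ 2) (hw : Summable fun i => ‖w i‖ ^ 2) :
    Summable fun i => ‖v i - w i‖ ^ 2 :=
  .of_nonneg_of_le (fun _ => sq_nonneg _)
    (fun _ => (pow_le_pow_left₀ (norm_nonneg _) (norm_sub_le _ _) 2).trans add_sq_le)
    ((hv.add hw).mul_left 2)

theorem tsum_enorm_inner_sq (b : HilbertBasis ι 𝕜 H) (x : H) :
    ∑' i, ‖⟪b i, x⟫_𝕜‖ₑ ^ 2 = ‖x‖ₑ ^ 2 := by
  have parseval : HasSum (fun i => ‖⟪b i, x⟫_𝕜‖ ^ 2) (‖x‖ ^ 2) := by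
    simpa [b.repr_apply_apply] using lp.hasSum_norm (p := 2) (by norm_num) (b.repr x)
  calc ∑' i, ‖⟪b i, x⟫_𝕜‖ₑ ^ 2
      = ∑' i, ENNReal.ofReal (‖⟪b i, x⟫_𝕜‖ ^ 2) := by
        simp only [ENNReal.ofReal_pow (norm_nonneg _), ofReal_norm]
    _ = ‖x‖ₑ ^ 2 := by
        rw [← ENNReal.ofReal_tsum_of_nonneg (fun _ => sq_nonneg _) parseval.summable,
          parseval.tsum_eq, ENNReal.ofReal_pow (norm_nonneg _), ofReal_norm]

variable [CompleteSpace H] [CompleteSpace K] [CompleteSpace L]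

theorem tsum_enorm_apply_sq_eq_adjoint (b : HilbertBasis ι 𝕜 H) (e : HilbertBasis κ 𝕜 K)
    (T : H →L[𝕜] K) : ∑' i, ‖T (b i)‖ₑ ^ 2 = ∑' j, ‖T.adjoint (e j)‖ₑ ^ 2 :=
  calc ∑' i, ‖T (b i)‖ₑ ^ 2
      = ∑' i, ∑' j, ‖⟪e j, T (b i)⟫_𝕜‖ₑ ^ 2 := by simp only [tsum_enorm_inner_sq]
    _ = ∑' j, ∑' i, ‖⟪e j, T (b i)⟫_𝕜‖ₑ ^ 2 := ENNReal.tsum_comm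
    _ = ∑' j, ∑' i, ‖⟪b i, T.adjoint (e j)⟫_𝕜‖ₑ ^ 2 := by
        simp only [← ofReal_norm, norm_inner_symm (e _), ContinuousLinearMap.adjoint_inner_right]
    _ = ∑' j, ‖T.adjoint (e j)‖ₑ ^ 2 := by simp only [tsum_enorm_inner_sq]

theorem tsum_enorm_comp_sq_le (b : HilbertBasis ι 𝕜 H) (c : HilbertBasis κ 𝕜 K)
    (S : K →L[𝕜] L) (G : H →L[𝕜] K) :
    ∑' i, ‖S (G (b i))‖ₑ ^ 2 ≤ ‖G‖ₑ ^ 2 * ∑' j, ‖S (c j)‖ₑ ^ 2 := by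
  obtain ⟨_, e, -⟩ := exists_hilbertBasis 𝕜 L
  calc ∑' i, ‖S (G (b i))‖ₑ ^ 2
      = ∑' k, ‖(S ∘L G).adjoint (e k)‖ₑ ^ 2 := tsum_enorm_apply_sq_eq_adjoint b e (S ∘L G)
    _ ≤ ∑' k, ‖G‖ₑ ^ 2 * ‖S.adjoint (e k)‖ₑ ^ 2 := by
        refine ENNReal.tsum_le_tsum fun k => ?_
        rw [ContinuousLinearMap.adjoint_comp, ContinuousLinearMap.comp_apply, ← mul_pow,
          ← LinearIsometryEquiv.enorm_map ContinuousLinearMap.adjoint G]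
        exact pow_le_pow_left₀ zero_le (ContinuousLinearMap.le_opENorm _ _) 2
    _ = ‖G‖ₑ ^ 2 * ∑' j, ‖S (c j)‖ₑ ^ 2 := by
        rw [ENNReal.tsum_mul_left, tsum_enorm_apply_sq_eq_adjoint c e S]

theorem summable_norm_comp_sq (b : HilbertBasis ι 𝕜 H) (c : HilbertBasis κ 𝕜 K)
    {S : K →L[𝕜] L} (hS : Summable fun j => ‖S (c j)‖ ^ 2) (G : H →L[𝕜] K) :
    Summable fun i => ‖S (G (b i))‖ ^ 2 := by
  rw [summable_norm_sq_iff_tsum_enorm_sq_ne_top] at hS ⊢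
  exact ne_top_of_le_ne_top (ENNReal.mul_ne_top (by finiteness) hS)
    (tsum_enorm_comp_sq_le b c S G)

end HilbertSchmidt

section MeanSquare

variable {X Y E : Type*} [MeasurableSpace X] [MeasurableSpace Y] [NormedAddCommGroup E]

theorem Lp_two_norm_sq_eq_integral {μ : Measure X} (f : Lp E 2 μ) :
    ‖f‖ ^ 2 = ∫ x, ‖f x‖ ^ 2 ∂μ := by
  rw [Lp.norm_def, toReal_eLpNorm (Lp.aestronglyMeasurable f),
    lpNorm_eq_integral_norm_rpow_toReal two_ne_zero ENNReal.ofNat_ne_top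
      (Lp.aestronglyMeasurable f), ← Real.rpow_natCast, ← Real.rpow_mul (by positivity)]
  simp

theorem ae_aestronglyMeasurable_of_comp {μ : Measure X} {p : Kernel X Y} {f : Y → E}
    (hf : AEStronglyMeasurable f (p ∘ₘ μ)) : ∀ᵐ x ∂μ, AEStronglyMeasurable f (p x) := by
  filter_upwards [Measure.ae_ae_of_ae_comp hf.ae_eq_mk] with x hx
    using ⟨hf.mk f, hf.stronglyMeasurable_mk, hx⟩

theorem ae_memLp_of_memLp_comp {μ : Measure X} {p : Kernel X Y} {q : ℝ≥0∞} (hq : q ≠ 0)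
    (hq' : q ≠ ∞) {f : Y → E} (hf : MemLp f q (p ∘ₘ μ)) : ∀ᵐ x ∂μ, MemLp f q (p x) := by
  filter_upwards [ae_aestronglyMeasurable_of_comp hf.1,
    Measure.ae_integrable_of_integrable_comp (hf.integrable_norm_rpow hq hq')] with x meas int
    using (integrable_norm_rpow_iff meas hq hq').1 int

theorem kernel_invariant_iff_measure_eq_lintegral {p : Kernel X X} {π : Measure X} :
    p.Invariant π ↔ ∀ B, MeasurableSet B → π B = ∫⁻ x, p x B ∂π := by
  rw [Kernel.Invariant, eq_comm, Measure.ext_iff]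
  refine forall₂_congr fun B hB => ?_
  rw [Measure.bind_apply hB p.aemeasurable]

theorem memLp_comp_fst_compProd {μ : Measure X} [SFinite μ] {p : Kernel X Y} [IsMarkovKernel p]
    {q : ℝ≥0∞} {g : X → E} (hg : MemLp g q μ) : MemLp (fun z : X × Y => g z.1) q (μ ⊗ₘ p) :=
  hg.comp_measurePreserving ⟨measurable_fst, Measure.fst_compProd μ p⟩

theorem memLp_comp_snd_compProd {μ : Measure X} [SFinite μ] {p : Kernel X Y} [IsSFiniteKernel p]
    {q : ℝ≥0∞} {f : Y → E} (hf : MemLp f q (p ∘ₘ μ)) :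
    MemLp (fun z : X × Y => f z.2) q (μ ⊗ₘ p) :=
  hf.comp_measurePreserving ⟨measurable_snd, Measure.snd_compProd μ p⟩

section Conditioning

variable [NormedSpace ℝ E]

theorem integral_comp_eq_integral_integral {μ : Measure X} {p : Kernel X Y} {f : Y → E}
    (hf : Integrable f (p ∘ₘ μ)) : ∫ y, f y ∂(p ∘ₘ μ) = ∫ x, ∫ y, f y ∂p x ∂μ := by
  rw [Measure.comp_eq_comp_const_apply] at hf ⊢
  rw [Kernel.integral_comp hf, Kernel.const_apply]

theorem aestronglyMeasurable_integral_kernel {μ : Measure X} {p : Kernel X Y} {f : Y → E}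
    (hf : AEStronglyMeasurable f (p ∘ₘ μ)) : AEStronglyMeasurable (fun x => ∫ y, f y ∂p x) μ := by
  rw [Measure.comp_eq_comp_const_apply] at hf
  simpa only [Kernel.const_apply] using hf.integral_kernel_comp

theorem enorm_integral_rpow_le_lintegral {ν : Measure Y} [IsProbabilityMeasure ν] {f : Y → E}
    (hf : AEStronglyMeasurable f ν) {r : ℝ} (hr : 1 ≤ r) :
    ‖∫ y, f y ∂ν‖ₑ ^ r ≤ ∫⁻ y, ‖f y‖ₑ ^ r ∂ν := by
  have hr₀ : 0 < r := one_pos.trans_le hr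
  calc ‖∫ y, f y ∂ν‖ₑ ^ r
      ≤ eLpNorm' f 1 ν ^ r := by
        gcongr
        simpa [eLpNorm'] using enorm_integral_le_lintegral_enorm f
    _ ≤ eLpNorm' f r ν ^ r := by
        gcongr
        exact eLpNorm'_le_eLpNorm'_of_exponent_le one_pos hr ν hf
    _ = ∫⁻ y, ‖f y‖ₑ ^ r ∂ν := by
        rw [eLpNorm', ← ENNReal.rpow_mul, one_div_mul_cancel hr₀.ne', ENNReal.rpow_one]

variable {μ : Measure X} {p : Kernel X Y} [IsMarkovKernel p] {q : ℝ≥0∞} {f : Y → E}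

theorem eLpNorm_integral_kernel_le (hq : 1 ≤ q) (hq' : q ≠ ∞)
    (hf : AEStronglyMeasurable f (p ∘ₘ μ)) :
    eLpNorm (fun x => ∫ y, f y ∂p x) q μ ≤ eLpNorm f q (p ∘ₘ μ) := by
  have hq₀ : q ≠ 0 := (one_pos.trans_le hq).ne'
  have jensen : ∀ᵐ x ∂μ, ‖∫ y, f y ∂p x‖ₑ ^ q.toReal ≤ ∫⁻ y, ‖f y‖ₑ ^ q.toReal ∂p x := by
    filter_upwards [ae_aestronglyMeasurable_of_comp hf] with x hx
    exact enorm_integral_rpow_le_lintegral hx (ENNReal.toReal_one ▸ ENNReal.toReal_mono hq' hq)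
  rw [eLpNorm_eq_lintegral_rpow_enorm_toReal hq₀ hq',
    eLpNorm_eq_lintegral_rpow_enorm_toReal hq₀ hq',
    Measure.lintegral_bind p.aemeasurable (hf.enorm.pow_const _)]
  exact ENNReal.rpow_le_rpow (lintegral_mono_ae jensen) (by positivity)

theorem memLp_integral_kernel (hq : 1 ≤ q) (hq' : q ≠ ∞) (hf : MemLp f q (p ∘ₘ μ)) :
    MemLp (fun x => ∫ y, f y ∂p x) q μ :=
  ⟨aestronglyMeasurable_integral_kernel hf.1,
    (eLpNorm_integral_kernel_le hq hq' hf.1).trans_lt hf.2⟩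

theorem norm_le_of_ae_eq_integral_kernel [Fact (1 ≤ q)] {π : Measure X} {p : Kernel X X}
    [IsMarkovKernel p] (hp : p.Invariant π) (hq' : q ≠ ∞) {f g : Lp E q π}
    (hg : g =ᵐ[π] fun x => ∫ y, f y ∂p x) : ‖g‖ ≤ ‖f‖ := by
  rw [Lp.norm_def, Lp.norm_def, eLpNorm_congr_ae hg]
  refine ENNReal.toReal_mono (Lp.eLpNorm_ne_top f) ?_
  have hf : AEStronglyMeasurable f (p ∘ₘ π) := hp.def.symm ▸ Lp.aestronglyMeasurable f
  simpa only [hp.def] using eLpNorm_integral_kernel_le Fact.out hq' hf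

end Conditioning

end MeanSquare

section BiasVariance

variable {X Y E : Type*} [MeasurableSpace X] [MeasurableSpace Y]
  [NormedAddCommGroup E] [NormedSpace ℝ E] [CompleteSpace E]

theorem integral_norm_sub_const_sq (𝕜 : Type*) [RCLike 𝕜] [InnerProductSpace 𝕜 E]
    {ν : Measure Y} [IsProbabilityMeasure ν] {f : Y → E} (hf : MemLp f 2 ν) (c : E) :
    ∫ y, ‖f y - c‖ ^ 2 ∂ν = ∫ y, ‖f y‖ ^ 2 ∂ν - ‖∫ y, f y ∂ν‖ ^ 2 + ‖(∫ y, f y ∂ν) - c‖ ^ 2 := by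
  have f_int : Integrable f ν := hf.integrable one_le_two
  have sq_int : Integrable (fun y => ‖f y‖ ^ 2) ν := hf.integrable_norm_pow two_ne_zero
  have inner_int : Integrable (fun y => 2 * RCLike.re ⟪c, f y⟫_𝕜) ν :=
    (f_int.const_inner c).re.const_mul 2
  have diff_int : Integrable (fun y => ‖f y‖ ^ 2 - 2 * RCLike.re ⟪c, f y⟫_𝕜) ν :=
    sq_int.sub inner_int
  have expand (u : E) : ‖u - c‖ ^ 2 = ‖u‖ ^ 2 - 2 * RCLike.re ⟪c, u⟫_𝕜 + ‖c‖ ^ 2 := by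
    rw [norm_sub_sq (𝕜 := 𝕜), inner_re_symm]
  calc ∫ y, ‖f y - c‖ ^ 2 ∂ν
      = ∫ y, ‖f y‖ ^ 2 ∂ν - 2 * RCLike.re ⟪c, ∫ y, f y ∂ν⟫_𝕜 + ‖c‖ ^ 2 := by
        simp only [expand]
        rw [integral_add diff_int (integrable_const _), integral_sub sq_int inner_int,
          integral_const_mul, integral_re (f_int.const_inner c), integral_inner f_int,
          integral_const, probReal_univ, one_smul]
    _ = ∫ y, ‖f y‖ ^ 2 ∂ν - ‖∫ y, f y ∂ν‖ ^ 2 + ‖(∫ y, f y ∂ν) - c‖ ^ 2 := by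
        rw [expand]; ring

theorem integral_compProd_norm_sub_sq (𝕜 : Type*) [RCLike 𝕜] [InnerProductSpace 𝕜 E]
    {μ : Measure X} [SFinite μ] {p : Kernel X Y} [IsMarkovKernel p] {f : Y → E} {g : X → E}
    (hf : MemLp f 2 (p ∘ₘ μ)) (hg : MemLp g 2 μ) :
    ∫ z, ‖f z.2 - g z.1‖ ^ 2 ∂(μ ⊗ₘ p)
      = ∫ y, ‖f y‖ ^ 2 ∂(p ∘ₘ μ) - ∫ x, ‖∫ y, f y ∂p x‖ ^ 2 ∂μ
        + ∫ x, ‖(∫ y, f y ∂p x) - g x‖ ^ 2 ∂μ := by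
  have pf_mem : MemLp (fun x => ∫ y, f y ∂p x) 2 μ :=
    memLp_integral_kernel one_le_two ENNReal.ofNat_ne_top hf
  have f_sq : Integrable (fun y => ‖f y‖ ^ 2) (p ∘ₘ μ) := hf.integrable_norm_pow two_ne_zero
  have cond_sq : Integrable (fun x => ∫ y, ‖f y‖ ^ 2 ∂p x) μ := by
    simpa using Measure.integrable_integral_norm_of_integrable_comp f_sq
  have pf_sq : Integrable (fun x => ‖∫ y, f y ∂p x‖ ^ 2) μ := pf_mem.integrable_norm_pow two_ne_zero
  have var_int : Integrable (fun x => ∫ y, ‖f y‖ ^ 2 ∂p x - ‖∫ y, f y ∂p x‖ ^ 2) μ :=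
    cond_sq.sub pf_sq
  have bias_sq : Integrable (fun x => ‖(∫ y, f y ∂p x) - g x‖ ^ 2) μ :=
    (pf_mem.sub hg).integrable_norm_pow two_ne_zero
  have err_sq : Integrable (fun z : X × Y => ‖f z.2 - g z.1‖ ^ 2) (μ ⊗ₘ p) :=
    ((memLp_comp_snd_compProd hf).sub (memLp_comp_fst_compProd hg)).integrable_norm_pow two_ne_zero
  calc ∫ z, ‖f z.2 - g z.1‖ ^ 2 ∂(μ ⊗ₘ p)
      = ∫ x, ∫ y, ‖f y - g x‖ ^ 2 ∂p x ∂μ := Measure.integral_compProd err_sq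
    _ = ∫ x, (∫ y, ‖f y‖ ^ 2 ∂p x - ‖∫ y, f y ∂p x‖ ^ 2 + ‖(∫ y, f y ∂p x) - g x‖ ^ 2) ∂μ := by
        refine integral_congr_ae ?_
        filter_upwards [ae_memLp_of_memLp_comp two_ne_zero ENNReal.ofNat_ne_top hf] with x hx
          using integral_norm_sub_const_sq 𝕜 hx (g x)
    _ = ∫ y, ‖f y‖ ^ 2 ∂(p ∘ₘ μ) - ∫ x, ‖∫ y, f y ∂p x‖ ^ 2 ∂μ
        + ∫ x, ‖(∫ y, f y ∂p x) - g x‖ ^ 2 ∂μ := by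
        rw [integral_add var_int bias_sq, integral_sub cond_sq pf_sq,
          integral_comp_eq_integral_integral f_sq]

theorem integral_compProd_norm_sub_sq_eq_norm_sq (𝕜 : Type*) [RCLike 𝕜] [InnerProductSpace 𝕜 E]
    {π : Measure X} [SFinite π] {p : Kernel X X} [IsMarkovKernel p] (hp : p.Invariant π)
    {f h : Lp E 2 π} (hh : h =ᵐ[π] fun x => ∫ y, f y ∂p x) (g : Lp E 2 π) :
    ∫ z, ‖f z.2 - g z.1‖ ^ 2 ∂(π ⊗ₘ p) = ‖f‖ ^ 2 - ‖h‖ ^ 2 + ‖h - g‖ ^ 2 := by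
  have hf : MemLp f 2 (p ∘ₘ π) := hp.def.symm ▸ Lp.memLp f
  rw [integral_compProd_norm_sub_sq 𝕜 hf (Lp.memLp g), hp.def]
  simp only [Lp_two_norm_sq_eq_integral]
  congr 1
  · congr 1
    refine integral_congr_ae ?_
    filter_upwards [hh] with x hx
    rw [hx]
  · refine integral_congr_ae ?_
    filter_upwards [hh, Lp.coeFn_sub h g] with x hx hsub
    rw [hsub, Pi.sub_apply, hx]

theorem stmt2_general {𝕜 ι H : Type*} [RCLike 𝕜] [InnerProductSpace 𝕜 E]
    (p : Kernel X X) [IsMarkovKernel p] (π : Measure X) [SFinite π] (hp : p.Invariant π)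
    [NormedAddCommGroup H] [InnerProductSpace 𝕜 H] [CompleteSpace H] (b : HilbertBasis ι 𝕜 H)
    (A : Lp E 2 π → Lp E 2 π) (hA : ∀ f, A f =ᵐ[π] fun x => ∫ y, f y ∂p x)
    (S : H →L[𝕜] Lp E 2 π) (hS : Summable fun i => ‖S (b i)‖ ^ 2) (G : H →L[𝕜] H) :
    ∑' i, ∫ z, ‖S (b i) z.2 - S (G (b i)) z.1‖ ^ 2 ∂(π ⊗ₘ p)
      = (∑' i, ‖S (b i)‖ ^ 2) - (∑' i, ‖A (S (b i))‖ ^ 2)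
        + ∑' i, ‖A (S (b i)) - S (G (b i))‖ ^ 2 := by
  have hAS : Summable fun i => ‖A (S (b i))‖ ^ 2 :=
    hS.of_nonneg_of_le (fun _ => sq_nonneg _) fun i => pow_le_pow_left₀ (norm_nonneg _)
      (norm_le_of_ae_eq_integral_kernel hp ENNReal.ofNat_ne_top (hA (S (b i)))) 2
  have hSG : Summable fun i => ‖S (G (b i))‖ ^ 2 := summable_norm_comp_sq b b hS G
  have hbias : Summable fun i => ‖A (S (b i)) - S (G (b i))‖ ^ 2 := summable_norm_sub_sq hAS hSG
  simp only [integral_compProd_norm_sub_sq_eq_norm_sq 𝕜 hp (hA _)]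
  rw [(hS.sub hAS).tsum_add hbias, hS.tsum_sub hAS]

end BiasVariance

/-- With `A` the Koopman operator on `L²(X,π)` of a Markov kernel `p` with
invariant measure `π`, `ρ = π ⊗ₘ p`, `S : H → L²(X,π)` Hilbert–Schmidt and `G : H → H`
Hilbert–Schmidt, for every Hilbert basis `(h_i)_{i ∈ ℕ}` of `H`:
`Σ_i ∫ ((S h_i)(y) − (S G h_i)(x))² dρ = ‖S‖²_HS − ‖A∘S‖²_HS + ‖A∘S − S∘G‖²_HS`
(the HS norms being computed via the basis, equivalently any basis). -/
theorem stmt2 {X : Type*} [MeasurableSpace X]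
    (p : Kernel X X) [IsMarkovKernel p]
    (π : Measure X) [IsProbabilityMeasure π]
    (hinv : ∀ B : Set X, MeasurableSet B → π B = ∫⁻ x, p x B ∂π)
    {H : Type*} [NormedAddCommGroup H] [InnerProductSpace ℝ H] [CompleteSpace H]
    (b : HilbertBasis ℕ ℝ H)
    (A : Lp ℝ 2 π →L[ℝ] Lp ℝ 2 π)
    (hA : ∀ f : Lp ℝ 2 π, (A f : X → ℝ) =ᵐ[π] fun x => ∫ y, f y ∂(p x))
    (S : H →L[ℝ] Lp ℝ 2 π) (hS : Summable fun i => ‖S (b i)‖ ^ 2)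
    (G : H →L[ℝ] H) (hG : Summable fun i => ‖G (b i)‖ ^ 2) :
    ∑' i : ℕ, ∫ z : X × X, ((S (b i) : X → ℝ) z.2 - (S (G (b i)) : X → ℝ) z.1) ^ 2 ∂(π ⊗ₘ p)
      = (∑' i : ℕ, ‖S (b i)‖ ^ 2) - (∑' i : ℕ, ‖A (S (b i))‖ ^ 2)
        + ∑' i : ℕ, ‖A (S (b i)) - S (G (b i))‖ ^ 2 := by
  simpa only [Real.norm_eq_abs, sq_abs] using
    stmt2_general p π (kernel_invariant_iff_measure_eq_lintegral.2 hinv) b A hA S hS G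
end

section
/- Let H and L be separable Hilbert spaces, S : H → L a Hilbert–Schmidt operator, K : L → L a bounded operator, and Z := K ∘ S (which is Hilbert–Schmidt). If range(Z) ⊆ closure(range(S)), then for every δ > 0 there exists a finite-rank, non-defective operator G : H → H such that ‖Z − S ∘ G‖_HS < δ. -/
open MeasureTheory

/-- A finite-rank operator `G` on a Hilbert space is *non-defective* if for some
finite-dimensional `G`-invariant subspace `V` containing `range G`, the restriction of `G`
to `V` is diagonalizable over `ℂ` (the sup of its eigenspaces is everything). -/
def NonDefective {H : Type*} [NormedAddCommGroup H] [InnerProductSpace ℂ H]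
    (G : H →L[ℂ] H) : Prop :=
  ∃ (V : Submodule ℂ H) (_ : FiniteDimensional ℂ V)
    (_ : LinearMap.range (G : H →ₗ[ℂ] H) ≤ V) (hV : ∀ x ∈ V, (G : H →ₗ[ℂ] H) x ∈ V),
    ⨆ μ : ℂ, Module.End.eigenspace (LinearMap.restrict (G : H →ₗ[ℂ] H) hV) μ = ⊤

/-!
View `z = (Z (b i))ᵢ` as an element of `ℓ²` and truncate it to a finite set `s` of indices. Pick
`g k` with `S (g k) ≈ z k` for `k ∈ s` and let `G = ∑ k ∈ s, φ k (·) • g k`, where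
`φ k = ⟪b k, ·⟫ + c ⟪b (e k), ·⟫` and the injection `e` moves `s` off itself. The second summand of
`φ k` costs at most `‖c‖ ‖S (g k)‖` in `ℓ²`, so a small `c` is harmless. It is there because
`S (b j) → 0`: for `e k` far enough out, adding multiples of the vectors `b (e l)` to `g k` hardly
changes `S (g k)`, whereas it changes the numbers `φ l (g k)` arbitrarily. Hence `φ` and `g` can be
made biorthogonal, and then `G` is a projection, in particular diagonalizable.
-/

open Filter Topology

open scoped ENNReal

theorem NonDefective.of_isIdempotentElem {H : Type*} [NormedAddCommGroup H]
    [InnerProductSpace ℂ H] {G : H →L[ℂ] H} (hG : IsIdempotentElem G)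
    (hfin : FiniteDimensional ℂ (LinearMap.range (G : H →ₗ[ℂ] H))) : NonDefective G := by
  refine ⟨LinearMap.range (G : H →ₗ[ℂ] H), hfin, le_rfl, fun x _ => ⟨x, rfl⟩, ?_⟩
  refine top_le_iff.mp (le_trans ?_ (le_iSup _ (1 : ℂ)))
  rintro ⟨_, x, rfl⟩ -
  rw [Module.End.mem_eigenspace_iff, one_smul]
  exact Subtype.ext (DFunLike.congr_fun hG x)

theorem exists_injOn_forall_notMem_and_of_eventually_cofinite {ι : Type*} [Infinite ι]
    {p : ι → Prop} (hp : ∀ᶠ i in cofinite, p i) (s : Finset ι) :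
    ∃ e : ι → ι, Set.InjOn e s ∧ ∀ k ∈ s, e k ∉ s ∧ p (e k) := by
  have hinf : {i | i ∉ s ∧ p i}.Infinite :=
    frequently_cofinite_iff_infinite.mp (s.eventually_cofinite_notMem.and hp).frequently
  obtain ⟨e, hmaps, hinj⟩ := s.finite_toSet.exists_injOn_of_encard_le
    (t := {i | i ∉ s ∧ p i}) (by simp [hinf.encard_eq])
  exact ⟨e, hinj, hmaps⟩

section Biorthogonal

variable {𝕜 ι E : Type*}

theorem apply_add_sum_smul_eq_of_biorthogonal [DecidableEq ι] [Field 𝕜] [AddCommGroup E]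
    [Module 𝕜 E] {φ : ι → E →ₗ[𝕜] 𝕜} {w : ι → E} {c : 𝕜} (hc : c ≠ 0) {s : Finset ι}
    (hw : ∀ l ∈ s, ∀ m ∈ s, φ l (w m) = if l = m then c else 0) (x : E) (t : ι → 𝕜) {l : ι}
    (hl : l ∈ s) : φ l (x + ∑ m ∈ s, (c⁻¹ * (t m - φ m x)) • w m) = t l := by
  have hsum : ∑ m ∈ s, φ l ((c⁻¹ * (t m - φ m x)) • w m) = t l - φ l x := by
    rw [Finset.sum_eq_single_of_mem l hl]
    · rw [map_smul, hw l hl l hl, if_pos rfl, smul_eq_mul]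
      field_simp
    · intro m hm hml
      rw [map_smul, hw l hl m hm, if_neg hml.symm, smul_zero]
  rw [map_add, map_sum, hsum, add_sub_cancel]

variable [NormedField 𝕜] [SeminormedAddCommGroup E] [NormedSpace 𝕜 E]

theorem sum_smulRight_apply (φ : ι → E →L[𝕜] 𝕜) (g : ι → E) (s : Finset ι) (x : E) :
    (∑ k ∈ s, (φ k).smulRight (g k)) x = ∑ k ∈ s, φ k x • g k := by
  simp only [sum_apply, ContinuousLinearMap.smulRight_apply]

theorem finiteDimensional_range_sum_smulRight (φ : ι → E →L[𝕜] 𝕜) (g : ι → E) (s : Finset ι) :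
    FiniteDimensional 𝕜
      (LinearMap.range ((∑ k ∈ s, (φ k).smulRight (g k) : E →L[𝕜] E) : E →ₗ[𝕜] E)) := by
  have : FiniteDimensional 𝕜 (Submodule.span 𝕜 (g '' s)) :=
    FiniteDimensional.span_of_finite 𝕜 (s.finite_toSet.image g)
  refine Submodule.finiteDimensional_of_le (S₂ := Submodule.span 𝕜 (g '' s)) ?_
  rintro _ ⟨x, rfl⟩
  rw [ContinuousLinearMap.coe_coe, sum_smulRight_apply]
  exact Submodule.sum_mem _ fun k hk =>
    Submodule.smul_mem _ _ (Submodule.subset_span (Set.mem_image_of_mem g hk))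

theorem isIdempotentElem_sum_smulRight [DecidableEq ι] {φ : ι → E →L[𝕜] 𝕜} {g : ι → E}
    {s : Finset ι} (h : ∀ k ∈ s, ∀ l ∈ s, φ l (g k) = if l = k then 1 else 0) :
    IsIdempotentElem (∑ k ∈ s, (φ k).smulRight (g k)) := by
  have hfix : ∀ k ∈ s, (∑ l ∈ s, (φ l).smulRight (g l)) (g k) = g k := by
    intro k hk
    rw [sum_smulRight_apply, Finset.sum_eq_single_of_mem k hk]
    · rw [h k hk k hk, if_pos rfl, one_smul]
    · intro l hl hlk
      rw [h k hk l hl, if_neg hlk, zero_smul]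
  ext x
  rw [mul_apply_eq_comp, sum_smulRight_apply φ g s x, map_sum]
  exact Finset.sum_congr rfl fun k hk => by rw [map_smul, hfix k hk]

end Biorthogonal

section PerturbedCoord

variable {𝕜 ι H L : Type*} [RCLike 𝕜] [NormedAddCommGroup H] [InnerProductSpace 𝕜 H]
  {b : ι → H}

/-- The functional `⟪b k, ·⟫ + c ⟪b (e k), ·⟫`: a perturbation of the `k`-th coordinate functional
of the orthonormal family `b` which can be prescribed by moving along `b (e k)`. -/
noncomputable def perturbedCoord (b : ι → H) (c : 𝕜) (e : ι → ι) (k : ι) : H →L[𝕜] 𝕜 :=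
  innerSL 𝕜 (b k) + c • innerSL 𝕜 (b (e k))

theorem perturbedCoord_apply (b : ι → H) (c : 𝕜) (e : ι → ι) (k : ι) (x : H) :
    perturbedCoord b c e k x = inner 𝕜 (b k) x + c * inner 𝕜 (b (e k)) x := rfl

theorem perturbedCoord_apply_of_orthonormal [DecidableEq ι] (hb : Orthonormal 𝕜 b) (c : 𝕜)
    (e : ι → ι) (k i : ι) :
    perturbedCoord b c e k (b i) = (if k = i then 1 else 0) + c * if e k = i then 1 else 0 := by
  simp only [perturbedCoord_apply, orthonormal_iff_ite.mp hb]

theorem norm_perturbedCoord_apply_le (hb : Orthonormal 𝕜 b) (c : 𝕜) (e : ι → ι) (k : ι) (x : H) :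
    ‖perturbedCoord b c e k x‖ ≤ (1 + ‖c‖) * ‖x‖ := by
  have hinner (i : ι) : ‖inner 𝕜 (b i) x‖ ≤ ‖x‖ := by
    simpa only [hb.norm_eq_one, one_mul] using norm_inner_le_norm (𝕜 := 𝕜) (b i) x
  calc ‖perturbedCoord b c e k x‖ ≤ ‖inner 𝕜 (b k) x‖ + ‖c‖ * ‖inner 𝕜 (b (e k)) x‖ := by
        rw [perturbedCoord_apply, ← norm_mul]
        exact norm_add_le _ _
    _ ≤ ‖x‖ + ‖c‖ * ‖x‖ := by gcongr <;> exact hinner _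
    _ = (1 + ‖c‖) * ‖x‖ := by ring

variable [SeminormedAddCommGroup L] [NormedSpace 𝕜 L]

theorem exists_perturbedCoord_eq_and_norm_sub_le (hb : Orthonormal 𝕜 b) (S : H →ₗ[𝕜] L)
    {c : 𝕜} (hc : c ≠ 0) {s : Finset ι} {e : ι → ι} (he : Set.InjOn e s)
    (hes : ∀ k ∈ s, e k ∉ s) {τ : ℝ} (hτ : ∀ k ∈ s, ‖S (b (e k))‖ ≤ τ) (x : H) {t : ι → 𝕜}
    (ht : ∀ k, ‖t k‖ ≤ 1) :
    ∃ g : H, (∀ l ∈ s, perturbedCoord b c e l g = t l) ∧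
      ‖S g - S x‖ ≤ s.card * (‖c‖⁻¹ * (1 + (1 + ‖c‖) * ‖x‖) * τ) := by
  classical
  have hdual : ∀ l ∈ s, ∀ m ∈ s,
      perturbedCoord b c e l (b (e m)) = if l = m then c else 0 := by
    intro l hl m hm
    have hne : l ≠ e m := fun h => hes m hm (h ▸ hl)
    simp only [perturbedCoord_apply_of_orthonormal hb, if_neg hne, he.eq_iff hl hm, zero_add,
      mul_ite, mul_one, mul_zero]
  let a (m : ι) : 𝕜 := c⁻¹ * (t m - perturbedCoord b c e m x)
  have ha (m : ι) : ‖a m‖ ≤ ‖c‖⁻¹ * (1 + (1 + ‖c‖) * ‖x‖) := by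
    rw [norm_mul, norm_inv]
    gcongr
    exact (norm_sub_le _ _).trans (add_le_add (ht m) (norm_perturbedCoord_apply_le hb c e m x))
  refine ⟨x + ∑ m ∈ s, a m • b (e m), fun l hl => apply_add_sum_smul_eq_of_biorthogonal
    (φ := fun k => (perturbedCoord b c e k : H →ₗ[𝕜] 𝕜)) hc hdual x t hl, ?_⟩
  calc ‖S (x + ∑ m ∈ s, a m • b (e m)) - S x‖ = ‖∑ m ∈ s, a m • S (b (e m))‖ := by
        simp only [map_add, map_sum, map_smul, add_sub_cancel_left]
    _ ≤ ∑ _m ∈ s, ‖c‖⁻¹ * (1 + (1 + ‖c‖) * ‖x‖) * τ := by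
        refine norm_sum_le_of_le s fun m hm => (norm_smul _ _).trans_le ?_
        gcongr
        exacts [ha m, hτ m hm]
    _ = s.card * (‖c‖⁻¹ * (1 + (1 + ‖c‖) * ‖x‖) * τ) := by
        rw [Finset.sum_const, nsmul_eq_mul]

theorem exists_perturbedCoord_biorthogonal_norm_sub_lt [Infinite ι] [DecidableEq ι]
    (hb : Orthonormal 𝕜 b) {S : H →ₗ[𝕜] L} (hS : Tendsto (fun i => ‖S (b i)‖) cofinite (𝓝 0))
    {s : Finset ι} {z : ι → L} (hz : ∀ k, z k ∈ closure (Set.range S)) {c : 𝕜} (hc : c ≠ 0)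
    {ε : ℝ} (hε : 0 < ε) :
    ∃ (e : ι → ι) (g : ι → H),
      (∀ k ∈ s, ∀ l ∈ s, perturbedCoord b c e l (g k) = if l = k then 1 else 0) ∧
      ∀ k ∈ s, ‖z k - S (g k)‖ < ε := by
  have happrox (k : ι) : ∃ x, ‖z k - S x‖ < ε / 2 := by
    simpa only [Set.exists_range_iff, dist_eq_norm] using
      Metric.mem_closure_iff.mp (hz k) (ε / 2) (half_pos hε)
  choose x hx using happrox
  obtain ⟨τ, hτ, hτ0⟩ : ∃ τ : ℝ,
      (∀ k ∈ s, s.card * (‖c‖⁻¹ * (1 + (1 + ‖c‖) * ‖x k‖) * τ) < ε / 2) ∧ 0 < τ := by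
    refine Eventually.exists (f := 𝓝[>] (0 : ℝ)) (Eventually.and ?_ self_mem_nhdsWithin)
    refine (Finset.eventually_all s).mpr fun k _ => nhdsWithin_le_nhds ?_
    have hcont : Continuous fun τ : ℝ => s.card * (‖c‖⁻¹ * (1 + (1 + ‖c‖) * ‖x k‖) * τ) := by
      fun_prop
    exact hcont.continuousAt.eventually_lt_const (by simpa using hε)
  obtain ⟨e, he, hes⟩ :=
    exists_injOn_forall_notMem_and_of_eventually_cofinite (hS.eventually_le_const hτ0) s
  have hcorrect (k : ι) := exists_perturbedCoord_eq_and_norm_sub_le hb S hc he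
    (fun l hl => (hes l hl).1) (fun l hl => (hes l hl).2) (x k)
    (t := fun l => if l = k then 1 else 0) (fun l => by split_ifs <;> simp)
  choose g hdual hg using hcorrect
  refine ⟨e, g, fun k _ => hdual k, fun k hk => ?_⟩
  calc ‖z k - S (g k)‖ ≤ ‖z k - S (x k)‖ + ‖S (x k) - S (g k)‖ :=
        norm_sub_le_norm_sub_add_norm_sub ..
    _ < ε / 2 + ε / 2 := add_lt_add (hx k) (by rw [norm_sub_rev]; exact (hg k).trans_lt (hτ k hk))
    _ = ε := add_halves ε

end PerturbedCoord

section SequenceSpace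

variable {𝕜 ι H L : Type*} [RCLike 𝕜] [NormedAddCommGroup H] [InnerProductSpace 𝕜 H]
  [NormedAddCommGroup L] [NormedSpace 𝕜 L] {p : ℝ≥0∞}

theorem norm_sub_sum_single_add_smul_single_le [DecidableEq ι] [Fact (1 ≤ p)]
    (z : lp (fun _ : ι => L) p) (y : ι → L) (c : 𝕜) (e : ι → ι) (s : Finset ι) :
    ‖z - ∑ k ∈ s, (lp.single p k (y k) + c • lp.single p (e k) (y k))‖ ≤
      ‖z - ∑ k ∈ s, lp.single p k (z k)‖ + ∑ k ∈ s, (‖z k - y k‖ + ‖c‖ * ‖y k‖) := by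
  have hp : 0 < p := zero_lt_one.trans_le Fact.out
  have hsplit : z - ∑ k ∈ s, (lp.single p k (y k) + c • lp.single p (e k) (y k)) =
      (z - ∑ k ∈ s, lp.single p k (z k)) +
        ∑ k ∈ s, (lp.single p k (z k - y k) - c • lp.single p (e k) (y k)) := by
    simp only [lp.single_sub, Finset.sum_add_distrib, Finset.sum_sub_distrib]
    abel
  rw [hsplit]
  refine (norm_add_le _ _).trans (add_le_add_right (norm_sum_le_of_le s fun k _ => ?_) _)
  refine (norm_sub_le _ _).trans_eq ?_
  rw [norm_smul, lp.norm_single hp, lp.norm_single hp]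

theorem sum_single_add_smul_single_apply [DecidableEq ι] {b : ι → H} (hb : Orthonormal 𝕜 b)
    (S : H →ₗ[𝕜] L) (c : 𝕜) (e : ι → ι) (g : ι → H) (s : Finset ι) (i : ι) :
    (∑ k ∈ s, (lp.single p k (S (g k)) + c • lp.single p (e k) (S (g k))) :
        lp (fun _ : ι => L) p) i =
      S ((∑ k ∈ s, (perturbedCoord b c e k).smulRight (g k)) (b i)) := by
  simp only [lp.coeFn_sum, Finset.sum_apply, lp.coeFn_add, Pi.add_apply, lp.coeFn_smul,
    Pi.smul_apply, lp.single_apply, Pi.single_apply, sum_smulRight_apply,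
    perturbedCoord_apply_of_orthonormal hb, map_sum, map_add, map_smul, add_smul,
    mul_smul, ite_smul, one_smul, zero_smul, apply_ite S, map_zero, eq_comm (a := i)]

theorem exists_isIdempotentElem_lp_norm_sub_lt [Infinite ι] [Fact (1 ≤ p)] {b : ι → H}
    (hb : Orthonormal 𝕜 b) {S : H →ₗ[𝕜] L} (hS : Tendsto (fun i => ‖S (b i)‖) cofinite (𝓝 0))
    (hp : p ≠ ∞) (z : lp (fun _ : ι => L) p) (hz : ∀ i, z i ∈ closure (Set.range S))
    {δ : ℝ} (hδ : 0 < δ) :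
    ∃ (G : H →L[𝕜] H) (w : lp (fun _ : ι => L) p),
      FiniteDimensional 𝕜 (LinearMap.range (G : H →ₗ[𝕜] H)) ∧ IsIdempotentElem G ∧
      (∀ i, w i = S (G (b i))) ∧ ‖z - w‖ < δ := by
  classical
  obtain ⟨s, hs⟩ : ∃ s : Finset ι, ‖z - ∑ k ∈ s, lp.single p k (z k)‖ < δ / 2 := by
    simpa only [dist_eq_norm'] using
      ((Metric.tendsto_nhds.mp (lp.hasSum_single hp z)) (δ / 2) (half_pos hδ)).exists
  obtain ⟨ε, hsmall, hε⟩ : ∃ ε : ℝ, ∑ k ∈ s, (ε + ε * (‖z k‖ + ε)) < δ / 2 ∧ 0 < ε := by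
    have hcont : Continuous fun ε : ℝ => ∑ k ∈ s, (ε + ε * (‖z k‖ + ε)) := by fun_prop
    refine Eventually.exists (f := 𝓝[>] (0 : ℝ)) (Eventually.and ?_ self_mem_nhdsWithin)
    exact nhdsWithin_le_nhds (hcont.continuousAt.eventually_lt_const (by simpa using hδ))
  obtain ⟨e, g, hdual, hg⟩ := exists_perturbedCoord_biorthogonal_norm_sub_lt (s := s) hb hS hz
    (c := (ε : 𝕜)) (RCLike.ofReal_ne_zero.mpr hε.ne') hε
  have hSg (k : ι) (hk : k ∈ s) : ‖S (g k)‖ ≤ ‖z k‖ + ε :=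
    (norm_le_norm_add_norm_sub _ _).trans (by gcongr; exact (hg k hk).le)
  refine ⟨_, _, finiteDimensional_range_sum_smulRight _ g s, isIdempotentElem_sum_smulRight hdual,
    sum_single_add_smul_single_apply hb S (ε : 𝕜) e g s, ?_⟩
  refine (norm_sub_sum_single_add_smul_single_le z _ _ e s).trans_lt ?_
  rw [← add_halves δ]
  refine add_lt_add_of_lt_of_le hs ((Finset.sum_le_sum fun k hk => ?_).trans hsmall.le)
  rw [RCLike.norm_of_nonneg hε.le]
  gcongr
  exacts [(hg k hk).le, hSg k hk]

theorem memℓp_two_iff_summable_norm_sq {z : ι → L} :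
    Memℓp z 2 ↔ Summable fun i => ‖z i‖ ^ 2 := by
  simp [memℓp_gen_iff (p := 2) (by norm_num) (f := z)]

theorem lp_two_norm_eq_sqrt_tsum (z : lp (fun _ : ι => L) 2) :
    ‖z‖ = Real.sqrt (∑' i, ‖z i‖ ^ 2) := by
  simp [lp.norm_eq_tsum_rpow (p := 2) (by norm_num) z, Real.sqrt_eq_rpow]

end SequenceSpace

theorem tendsto_norm_cofinite_zero_of_summable_norm_sq {ι E : Type*} [SeminormedAddCommGroup E]
    {x : ι → E} (hx : Summable fun i => ‖x i‖ ^ 2) :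
    Tendsto (fun i => ‖x i‖) cofinite (𝓝 0) := by
  simpa only [Real.sqrt_sq (norm_nonneg _), Real.sqrt_zero] using hx.tendsto_cofinite_zero.sqrt

theorem summable_norm_sq_clm_apply {𝕜 ι E F : Type*} [NontriviallyNormedField 𝕜]
    [SeminormedAddCommGroup E] [NormedSpace 𝕜 E] [SeminormedAddCommGroup F] [NormedSpace 𝕜 F]
    (T : E →L[𝕜] F) {x : ι → E} (hx : Summable fun i => ‖x i‖ ^ 2) :
    Summable fun i => ‖T (x i)‖ ^ 2 := by
  refine (hx.mul_left (‖T‖ ^ 2)).of_nonneg_of_le (fun i => sq_nonneg _) fun i => ?_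
  rw [← mul_pow]
  exact pow_le_pow_left₀ (norm_nonneg _) (T.le_opNorm _) 2

theorem stmt3_general {𝕜 ι H L : Type*} [RCLike 𝕜] [Infinite ι]
    [NormedAddCommGroup H] [InnerProductSpace 𝕜 H] [NormedAddCommGroup L] [NormedSpace 𝕜 L]
    {b : ι → H} (hb : Orthonormal 𝕜 b)
    {S : H →ₗ[𝕜] L} (hS : Tendsto (fun i => ‖S (b i)‖) cofinite (𝓝 0))
    {z : ι → L} (hz : Summable fun i => ‖z i‖ ^ 2) (hrange : ∀ i, z i ∈ closure (Set.range S))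
    {δ : ℝ} (hδ : 0 < δ) :
    ∃ G : H →L[𝕜] H,
      FiniteDimensional 𝕜 (LinearMap.range (G : H →ₗ[𝕜] H)) ∧ IsIdempotentElem G ∧
      Summable (fun i => ‖z i - S (G (b i))‖ ^ 2) ∧
      Real.sqrt (∑' i, ‖z i - S (G (b i))‖ ^ 2) < δ := by
  let z' : lp (fun _ : ι => L) 2 := ⟨z, memℓp_two_iff_summable_norm_sq.mpr hz⟩
  obtain ⟨G, w, hfin, hidem, hw, hlt⟩ :=
    exists_isIdempotentElem_lp_norm_sub_lt hb hS ENNReal.ofNat_ne_top z' hrange hδ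
  have hdiff : (z' - w : lp (fun _ : ι => L) 2) = fun i => z i - S (G (b i)) :=
    funext fun i => congrArg (z i - ·) (hw i)
  refine ⟨G, hfin, hidem, memℓp_two_iff_summable_norm_sq.mp (hdiff ▸ lp.memℓp (z' - w)), ?_⟩
  rwa [lp_two_norm_eq_sqrt_tsum, hdiff] at hlt

/-- If `S : H → L` is Hilbert–Schmidt, `K : L → L` bounded, `Z := K ∘ S`, and
`range Z ⊆ closure (range S)`, then for every `δ > 0` there is a finite-rank non-defective
operator `G : H → H` with `‖Z − S∘G‖_HS < δ`. -/
theorem stmt3 {H L : Type*}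
    [NormedAddCommGroup H] [InnerProductSpace ℂ H] [CompleteSpace H]
    [NormedAddCommGroup L] [InnerProductSpace ℂ L] [CompleteSpace L]
    (b : HilbertBasis ℕ ℂ H)
    (S : H →L[ℂ] L) (hS : Summable fun i => ‖S (b i)‖ ^ 2)
    (K : L →L[ℂ] L)
    (hrange : Set.range (fun h => K (S h)) ⊆ closure (Set.range S))
    (δ : ℝ) (hδ : 0 < δ) :
    ∃ G : H →L[ℂ] H,
      FiniteDimensional ℂ (LinearMap.range (G : H →ₗ[ℂ] H)) ∧ NonDefective G ∧
      Summable (fun i => ‖K (S (b i)) - S (G (b i))‖ ^ 2) ∧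
      Real.sqrt (∑' i : ℕ, ‖K (S (b i)) - S (G (b i))‖ ^ 2) < δ := by
  obtain ⟨G, hfin, hidem, hG⟩ := stmt3_general b.orthonormal (S := (S : H →ₗ[ℂ] L))
    (tendsto_norm_cofinite_zero_of_summable_norm_sq hS) (summable_norm_sq_clm_apply K hS)
    (fun i => hrange ⟨b i, rfl⟩) hδ
  exact ⟨G, hfin, .of_isIdempotentElem hidem hfin, hG⟩
end
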